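/- arXiv:2109.00447 — 2 statements merged into one kernel-verified Lean document; each statement's English description precedes it below -/
import Mathlib

section
/- Let λ₁, λ₂, λ₃ be nonzero reals and let ⟨·,·⟩ be the symmetric bilinear form on T*𝔥₃ with matrix diag(λ₁, λ₂, λ₃, 1, 1, 1) in the basis (e₁,…,e₆). Then there exist γ ∈ ℝ and a Lie algebra derivation D of T*𝔥₃ with Ric = γ·id + D if and only if λ₁ = λ₂ = λ₃; in that case necessarily γ = −5/(2λ₁²), so the metric is an expanding algebraic Ricci soliton. -/
/-!
For a diagonal metric `diag(d₀,…,d₅)` the Ricci operator is diagonal, with entries half-sums of the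
squared structure constants `c₀ = d₃/(d₁d₂)`, `c₁ = d₄/(d₀d₂)`, `c₂ = d₅/(d₀d₁)`:
`2 Ric = diag(−c₁−c₂, −c₀−c₂, −c₀−c₁, c₀, c₁, c₂)`.
By nondegeneracy of the metric this is the only Ricci operator, so the soliton equation just asks
`Ric − γ` to be a derivation. For a diagonal matrix `diag(v)` that means `v₃ = v₁ + v₂`,
`v₄ = v₀ + v₂`, `v₅ = v₀ + v₁`, that is, `−2γ` equals each of `3c₀ + c₁ + c₂`, `c₀ + 3c₁ + c₂`,
`c₀ + c₁ + 3c₂`, which forces `c₀ = c₁ = c₂` and `γ = −5c₀/2`.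
-/

open Matrix

noncomputable section

/-- The Lie bracket of `T*𝔥₃` in the basis `(e₁,…,e₆)`:
`[e₁,e₂]=e₆`, `[e₁,e₃]=−e₅`, `[e₂,e₃]=e₄`. -/
def bra (x y : Fin 6 → ℝ) : Fin 6 → ℝ :=
  ![0, 0, 0, x 1 * y 2 - x 2 * y 1, x 2 * y 0 - x 0 * y 2, x 0 * y 1 - x 1 * y 0]

/-- The bilinear form associated to the matrix `A`. -/
def gm (A : Matrix (Fin 6) (Fin 6) ℝ) (x y : Fin 6 → ℝ) : ℝ := x ⬝ᵥ A.mulVec y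

/-- Curvature `R(x,y)z = ∇ₓ∇_y z − ∇_y∇ₓ z − ∇_{[x,y]} z` of a connection `D`. -/
def curv (D : (Fin 6 → ℝ) → (Fin 6 → ℝ) → (Fin 6 → ℝ)) (x y z : Fin 6 → ℝ) :
    Fin 6 → ℝ :=
  D x (D y z) - D y (D x z) - D (bra x y) z

/-- Ricci tensor `ρ(x,y) = tr(z ↦ R(z,x)y)`, computed in the standard basis. -/
def ricci (D : (Fin 6 → ℝ) → (Fin 6 → ℝ) → (Fin 6 → ℝ)) (x y : Fin 6 → ℝ) : ℝ :=
  ∑ i : Fin 6, curv D (Pi.single i 1) x y i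

/-- `Der` is (the matrix of) a derivation of `T*𝔥₃`. -/
def IsDerivation (Der : Matrix (Fin 6) (Fin 6) ℝ) : Prop :=
  ∀ x y : Fin 6 → ℝ,
    Der.mulVec (bra x y) = bra (Der.mulVec x) y + bra x (Der.mulVec y)

/-- `D` is the Levi-Civita connection of the metric with matrix `A`, expressed by the Koszul
formula. -/
def IsLeviCivita (A : Matrix (Fin 6) (Fin 6) ℝ)
    (D : (Fin 6 → ℝ) → (Fin 6 → ℝ) → (Fin 6 → ℝ)) : Prop :=
  ∀ x y z, 2 * gm A (D x y) z = gm A (bra x y) z - gm A (bra y z) x + gm A (bra z x) y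

/-- `Ric` is (the matrix of) the Ricci operator of the connection `D` with respect to the metric
with matrix `A`. -/
def IsRicciOperator (A : Matrix (Fin 6) (Fin 6) ℝ)
    (D : (Fin 6 → ℝ) → (Fin 6 → ℝ) → (Fin 6 → ℝ)) (Ric : Matrix (Fin 6) (Fin 6) ℝ) : Prop :=
  ∀ x y, gm A (Ric *ᵥ x) y = ricci D x y

/-- The metric with matrix `A` and connection `D` is an algebraic Ricci soliton with constant `γ`:
`Ric = γ·id + Der` for some derivation `Der`. -/
def IsAlgebraicRicciSoliton (A : Matrix (Fin 6) (Fin 6) ℝ)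
    (D : (Fin 6 → ℝ) → (Fin 6 → ℝ) → (Fin 6 → ℝ)) (γ : ℝ) : Prop :=
  ∃ Der Ric : Matrix (Fin 6) (Fin 6) ℝ, IsRicciOperator A D Ric ∧ IsDerivation Der ∧
    Ric = γ • (1 : Matrix (Fin 6) (Fin 6) ℝ) + Der

section Nondegenerate

variable {A : Matrix (Fin 6) (Fin 6) ℝ} {D D' : (Fin 6 → ℝ) → (Fin 6 → ℝ) → (Fin 6 → ℝ)}
  {Ric Ric' : Matrix (Fin 6) (Fin 6) ℝ}

lemma eq_of_forall_gm_eq (hA : A.Nondegenerate) {v w : Fin 6 → ℝ}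
    (h : ∀ z, gm A v z = gm A w z) : v = w :=
  sub_eq_zero.mp <| hA.eq_zero_of_ortho fun z => by
    rw [sub_dotProduct, sub_eq_zero]
    exact h z

lemma IsLeviCivita.unique (hA : A.Nondegenerate) (hD : IsLeviCivita A D)
    (hD' : IsLeviCivita A D') : D = D' := by
  funext x y
  refine eq_of_forall_gm_eq hA fun z => ?_
  linarith [hD x y z, hD' x y z]

lemma IsRicciOperator.unique (hA : A.Nondegenerate) (hRic : IsRicciOperator A D Ric)
    (hRic' : IsRicciOperator A D Ric') : Ric = Ric' :=
  Matrix.mulVec_injective <| funext fun x =>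
    eq_of_forall_gm_eq hA fun y => (hRic x y).trans (hRic' x y).symm

lemma IsRicciOperator.isAlgebraicRicciSoliton_iff (hA : A.Nondegenerate)
    (hRic : IsRicciOperator A D Ric) (γ : ℝ) :
    IsAlgebraicRicciSoliton A D γ ↔
      IsDerivation (Ric - γ • (1 : Matrix (Fin 6) (Fin 6) ℝ)) := by
  constructor
  · rintro ⟨Der, Ric', hRic', hDer, hsum⟩
    rwa [hRic.unique hA hRic', hsum, add_sub_cancel_left]
  · exact fun hDer => ⟨_, Ric, hRic, hDer, (add_sub_cancel _ _).symm⟩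

end Nondegenerate

lemma isDerivation_diagonal_iff (v : Fin 6 → ℝ) :
    IsDerivation (diagonal v) ↔ v 3 = v 1 + v 2 ∧ v 4 = v 0 + v 2 ∧ v 5 = v 0 + v 1 := by
  constructor
  · intro h
    have h12 : v 3 = v 1 + v 2 := by
      simpa [mulVec_diagonal, bra] using congrFun (h (Pi.single 1 1) (Pi.single 2 1)) 3
    have h20 : v 4 = v 2 + v 0 := by
      simpa [mulVec_diagonal, bra] using congrFun (h (Pi.single 2 1) (Pi.single 0 1)) 4
    have h01 : v 5 = v 0 + v 1 := by
      simpa [mulVec_diagonal, bra] using congrFun (h (Pi.single 0 1) (Pi.single 1 1)) 5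
    exact ⟨h12, h20.trans (add_comm _ _), h01⟩
  · rintro ⟨h3, h4, h5⟩ x y
    funext i
    fin_cases i <;> simp [mulVec_diagonal, bra, h3, h4, h5] <;> ring

lemma nondegenerate_diagonal {n R : Type*} [Finite n] [DecidableEq n] [CommRing R] [IsDomain R]
    {d : n → R} (hd : ∀ i, d i ≠ 0) : (diagonal d).Nondegenerate := by
  have := Fintype.ofFinite n
  apply nondegenerate_of_det_ne_zero
  rw [det_diagonal]
  exact Finset.prod_ne_zero_iff.mpr fun i _ => hd i

section DiagonalMetric

variable {d : Fin 6 → ℝ}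

lemma gm_diagonal (d x y : Fin 6 → ℝ) : gm (diagonal d) x y = ∑ i, x i * (d i * y i) := by
  simp only [gm, dotProduct, mulVec_diagonal]

/-- The Levi-Civita connection of the metric `diag(d)`, in coordinates. -/
def diagonalLeviCivita (d x y : Fin 6 → ℝ) : Fin 6 → ℝ :=
  ![(d 5 * (x 1 * y 5 + x 5 * y 1) - d 4 * (x 2 * y 4 + x 4 * y 2)) / (2 * d 0),
    (d 3 * (x 2 * y 3 + x 3 * y 2) - d 5 * (x 0 * y 5 + x 5 * y 0)) / (2 * d 1),
    (d 4 * (x 0 * y 4 + x 4 * y 0) - d 3 * (x 1 * y 3 + x 3 * y 1)) / (2 * d 2),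
    (x 1 * y 2 - x 2 * y 1) / 2, (x 2 * y 0 - x 0 * y 2) / 2, (x 0 * y 1 - x 1 * y 0) / 2]

lemma isLeviCivita_diagonalLeviCivita (hd : ∀ i, d i ≠ 0) :
    IsLeviCivita (diagonal d) (diagonalLeviCivita d) := by
  intro x y z
  have h0 := hd 0
  have h1 := hd 1
  have h2 := hd 2
  simp only [gm_diagonal, diagonalLeviCivita, bra, Fin.sum_univ_six, cons_val]
  field_simp
  ring

/-- The squared structure constants of `T*𝔥₃` in the frame obtained by normalizing the basis
`(e₁,…,e₆)` with respect to `diag(d)`; negative values can occur when `diag(d)` is indefinite.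
Entry `k` belongs to the bracket of the two vectors among `e₁, e₂, e₃` other than `e_{k+1}`. -/
def sqStructureConst (d : Fin 6 → ℝ) : Fin 3 → ℝ :=
  ![d 3 / (d 1 * d 2), d 4 / (d 0 * d 2), d 5 / (d 0 * d 1)]

/-- The sectional curvatures `K(e_{i+1}, e_{j+1})` of a diagonal metric with squared structure
constants `c`, with zeros on the diagonal. -/
def sectionalCurvature (c : Fin 3 → ℝ) : Matrix (Fin 6) (Fin 6) ℝ :=
  !![0, -3 * c 2 / 4, -3 * c 1 / 4, 0, c 1 / 4, c 2 / 4;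
    -3 * c 2 / 4, 0, -3 * c 0 / 4, c 0 / 4, 0, c 2 / 4;
    -3 * c 1 / 4, -3 * c 0 / 4, 0, c 0 / 4, c 1 / 4, 0;
    0, c 0 / 4, c 0 / 4, 0, 0, 0;
    c 1 / 4, 0, c 1 / 4, 0, 0, 0;
    c 2 / 4, c 2 / 4, 0, 0, 0, 0]

lemma curv_single_apply_self (hd : ∀ i, d i ≠ 0) (i : Fin 6) (x y : Fin 6 → ℝ) :
    curv (diagonalLeviCivita d) (Pi.single i 1) x y i =
      ∑ j, sectionalCurvature (sqStructureConst d) i j * (x j * (d j * y j)) := by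
  have h0 := hd 0
  have h1 := hd 1
  have h2 := hd 2
  fin_cases i <;>
    simp [curv, diagonalLeviCivita, bra, sectionalCurvature, sqStructureConst,
      Fin.sum_univ_six] <;>
    field_simp <;> ring

/-- The diagonal entries of the Ricci operator of a diagonal metric with squared structure
constants `c`. -/
def ricciEigenvalue (c : Fin 3 → ℝ) : Fin 6 → ℝ :=
  ![-(c 1 + c 2) / 2, -(c 0 + c 2) / 2, -(c 0 + c 1) / 2, c 0 / 2, c 1 / 2, c 2 / 2]

lemma sum_sectionalCurvature (c : Fin 3 → ℝ) (j : Fin 6) :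
    ∑ i, sectionalCurvature c i j = ricciEigenvalue c j := by
  fin_cases j <;> simp [sectionalCurvature, ricciEigenvalue, Fin.sum_univ_six] <;> ring

lemma isRicciOperator_diagonal (hd : ∀ i, d i ≠ 0) :
    IsRicciOperator (diagonal d) (diagonalLeviCivita d)
      (diagonal (ricciEigenvalue (sqStructureConst d))) := by
  intro x y
  simp only [ricci, curv_single_apply_self hd]
  rw [Finset.sum_comm, gm_diagonal]
  refine Finset.sum_congr rfl fun j _ => ?_
  rw [mulVec_diagonal, ← Finset.sum_mul, sum_sectionalCurvature, mul_assoc]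

lemma isDerivation_ricciEigenvalue_sub_iff (c : Fin 3 → ℝ) (γ : ℝ) :
    IsDerivation (diagonal (ricciEigenvalue c) - γ • (1 : Matrix (Fin 6) (Fin 6) ℝ)) ↔
      c 0 = c 1 ∧ c 1 = c 2 ∧ γ = -(5 / 2) * c 0 := by
  rw [smul_one_eq_diagonal, diagonal_sub, isDerivation_diagonal_iff]
  simp only [ricciEigenvalue, cons_val]
  constructor
  · rintro ⟨h3, h4, h5⟩
    exact ⟨by linarith, by linarith, by linarith⟩
  · rintro ⟨h01, h12, rfl⟩
    exact ⟨by linarith, by linarith, by linarith⟩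

lemma sqStructureConst_zero_eq_one_iff (hd : ∀ i, d i ≠ 0) :
    sqStructureConst d 0 = sqStructureConst d 1 ↔ d 0 * d 3 = d 1 * d 4 := by
  have h0 := hd 0
  have h1 := hd 1
  have h2 := hd 2
  simp only [sqStructureConst, cons_val]
  field_simp

lemma sqStructureConst_one_eq_two_iff (hd : ∀ i, d i ≠ 0) :
    sqStructureConst d 1 = sqStructureConst d 2 ↔ d 1 * d 4 = d 2 * d 5 := by
  have h0 := hd 0
  have h1 := hd 1
  have h2 := hd 2
  simp only [sqStructureConst, cons_val]
  field_simp

lemma isAlgebraicRicciSoliton_diagonal_iff (hd : ∀ i, d i ≠ 0)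
    {D : (Fin 6 → ℝ) → (Fin 6 → ℝ) → (Fin 6 → ℝ)} (hD : IsLeviCivita (diagonal d) D) (γ : ℝ) :
    IsAlgebraicRicciSoliton (diagonal d) D γ ↔
      d 0 * d 3 = d 1 * d 4 ∧ d 1 * d 4 = d 2 * d 5 ∧ γ = -(5 / 2) * (d 3 / (d 1 * d 2)) := by
  have hA := nondegenerate_diagonal hd
  obtain rfl := hD.unique hA (isLeviCivita_diagonalLeviCivita hd)
  rw [(isRicciOperator_diagonal hd).isAlgebraicRicciSoliton_iff hA,
    isDerivation_ricciEigenvalue_sub_iff, sqStructureConst_zero_eq_one_iff hd,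
    sqStructureConst_one_eq_two_iff hd]
  rfl

end DiagonalMetric

/-- For a soliton, `d₃ / (d₁ d₂) = d₄ d₅ / (d₀² d₃)`; the second form of the constant involves only
`λ₁` on `diag(λ₁, λ₂, λ₃, 1, 1, 1)`. -/
theorem stmt_15_general {d : Fin 6 → ℝ} (hd : ∀ i, d i ≠ 0)
    {D : (Fin 6 → ℝ) → (Fin 6 → ℝ) → (Fin 6 → ℝ)} (hD : IsLeviCivita (diagonal d) D) :
    ((∃ γ, IsAlgebraicRicciSoliton (diagonal d) D γ) ↔
      d 0 * d 3 = d 1 * d 4 ∧ d 1 * d 4 = d 2 * d 5) ∧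
    ∀ γ, IsAlgebraicRicciSoliton (diagonal d) D γ →
      γ = -5 * (d 4 * d 5) / (2 * (d 0 ^ 2 * d 3)) := by
  simp only [isAlgebraicRicciSoliton_diagonal_iff hd hD]
  refine ⟨⟨fun ⟨_, h01, h12, _⟩ => ⟨h01, h12⟩, fun ⟨h01, h12⟩ => ⟨_, h01, h12, rfl⟩⟩, ?_⟩
  rintro _ ⟨h01, h12, rfl⟩
  have hprod : d 3 * (d 0 ^ 2 * d 3) = d 4 * d 5 * (d 1 * d 2) :=
    calc d 3 * (d 0 ^ 2 * d 3) = (d 0 * d 3) * (d 0 * d 3) := by ring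
      _ = (d 1 * d 4) * (d 2 * d 5) := by rw [h01, ← h12]
      _ = d 4 * d 5 * (d 1 * d 2) := by ring
  have hconst : d 3 / (d 1 * d 2) = d 4 * d 5 / (d 0 ^ 2 * d 3) :=
    (div_eq_div_iff (mul_ne_zero (hd 1) (hd 2))
      (mul_ne_zero (pow_ne_zero 2 (hd 0)) (hd 3))).mpr hprod
  rw [hconst]
  ring

/-- The metric `diag(λ₁,λ₂,λ₃,1,1,1)` on `T*𝔥₃` is an algebraic Ricci soliton
(`Ric = γ·id + D`, `D` a derivation) iff `λ₁ = λ₂ = λ₃`; in that case necessarily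
`γ = −5/(2λ₁²)` (an expanding soliton). -/
theorem stmt_15 (l1 l2 l3 : ℝ) (h1 : l1 ≠ 0) (h2 : l2 ≠ 0) (h3 : l3 ≠ 0)
    (Smat : Matrix (Fin 6) (Fin 6) ℝ)
    (hSmat : Smat = Matrix.diagonal ![l1, l2, l3, 1, 1, 1])
    (D : (Fin 6 → ℝ) → (Fin 6 → ℝ) → (Fin 6 → ℝ))
    (hkoszul : ∀ x y z, 2 * gm Smat (D x y) z =
      gm Smat (bra x y) z - gm Smat (bra y z) x + gm Smat (bra z x) y) :
    ((∃ γ : ℝ, ∃ Der Ric : Matrix (Fin 6) (Fin 6) ℝ,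
        (∀ x y, gm Smat (Ric.mulVec x) y = ricci D x y) ∧ IsDerivation Der ∧
        Ric = γ • (1 : Matrix (Fin 6) (Fin 6) ℝ) + Der) ↔ (l1 = l2 ∧ l2 = l3)) ∧
    (∀ γ : ℝ, ∀ Der Ric : Matrix (Fin 6) (Fin 6) ℝ,
      (∀ x y, gm Smat (Ric.mulVec x) y = ricci D x y) → IsDerivation Der →
      Ric = γ • (1 : Matrix (Fin 6) (Fin 6) ℝ) + Der → γ = -5 / (2 * l1 ^ 2)) := by
  subst hSmat
  have hd : ∀ i, ![l1, l2, l3, 1, 1, 1] i ≠ 0 := by simp [Fin.forall_fin_succ, h1, h2, h3]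
  have h := by simpa only [cons_val, mul_one] using stmt_15_general hd hkoszul
  exact ⟨h.1, fun γ Der Ric hRic hDer hsum => h.2 γ ⟨Der, Ric, hRic, hDer, hsum⟩⟩
end
end

section
/- For every Lie subalgebra 𝔥 of T*𝔥₃ there exists a nondegenerate symmetric bilinear form ⟨·,·⟩ on T*𝔥₃ such that 𝔥 is totally geodesic for the associated metric, i.e. ∇_y z ∈ 𝔥 for all y, z ∈ 𝔥, where ∇ is the Levi-Civita connection of ⟨·,·⟩; equivalently, ⟨[x,y], z⟩ + ⟨[x,z], y⟩ = 0 for all x with ⟨x, 𝔥⟩ = 0 and all y, z ∈ 𝔥. -/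
open Matrix

noncomputable section

/-!
Let `Z` be the centre of a 2-step nilpotent Lie algebra. Two subspaces of complementary dimensions
are orthogonal complements of each other for a suitable nondegenerate symmetric form. Choose `K` of
dimension complementary to that of `Z` and comparable with the subalgebra `𝔥`, and take such a form
with `Zᗮ = K`. If `𝔥 ≤ K`, then the brackets, being central, are orthogonal to `𝔥`; if `K ≤ 𝔥`,
then `𝔥ᗮ ≤ Kᗮ = Z`, so the vectors orthogonal to `𝔥` are central. Either way
`⟨[x,y],z⟩ + ⟨[x,z],y⟩ = 0` for `x ∈ 𝔥ᗮ` and `y, z ∈ 𝔥`, and by the Koszul formula this sum is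
`2⟨x, ∇_y z⟩`.
-/

open Module Submodule

section Submodule

theorem exists_le_finrank_eq {R M : Type*} [Ring R] [Nontrivial R] [StrongRankCondition R]
    [AddCommGroup M] [Module R M] (N : Submodule R M) {n : ℕ} (hn : n ≤ finrank R N) :
    ∃ P ≤ N, finrank R P = n := by
  obtain ⟨v, hv⟩ := exists_linearIndependent_of_le_finrank hn
  refine ⟨span R (Set.range (N.subtype ∘ v)), ?_, ?_⟩
  · rw [span_le]
    rintro _ ⟨i, rfl⟩
    exact (v i).2
  · simpa using finrank_span_eq_card (hv.map' N.subtype N.ker_subtype)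

variable {k V : Type*} [Field k] [AddCommGroup V] [Module k V] [FiniteDimensional k V]

theorem finrank_add_finrank_of_disjoint_of_sup_eq {P Q W : Submodule k V} (hd : Disjoint P Q)
    (hs : P ⊔ Q = W) : finrank k P + finrank k Q = finrank k W := by
  rw [← finrank_sup_add_finrank_inf_eq, hs, hd.eq_bot, finrank_bot, add_zero]

theorem exists_ge_finrank_eq (W : Submodule k V) {n : ℕ} (hW : finrank k W ≤ n)
    (hn : n ≤ finrank k V) : ∃ U, W ≤ U ∧ finrank k U = n := by
  obtain ⟨Q, hQ⟩ := W.exists_isCompl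
  have hWQ := finrank_add_eq_of_isCompl hQ
  obtain ⟨P, hPQ, hP⟩ := exists_le_finrank_eq Q (n := n - finrank k W) (by omega)
  have hWP := finrank_add_finrank_of_disjoint_of_sup_eq (hQ.disjoint.mono_right hPQ) rfl
  exact ⟨W ⊔ P, le_sup_left, by omega⟩

theorem exists_finrank_eq_and_le_or_ge (W : Submodule k V) {n : ℕ} (hn : n ≤ finrank k V) :
    ∃ U : Submodule k V, finrank k U = n ∧ (U ≤ W ∨ W ≤ U) := by
  rcases le_total n (finrank k W) with h | h
  · obtain ⟨U, hUW, hU⟩ := exists_le_finrank_eq W h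
    exact ⟨U, hU, Or.inl hUW⟩
  · obtain ⟨U, hWU, hU⟩ := exists_ge_finrank_eq W h hn
    exact ⟨U, hU, Or.inr hWU⟩

theorem span_range_coe_finBasis (W : Submodule k V) :
    span k (Set.range fun i => (finBasis k W i : V)) = W := by
  change span k (Set.range (W.subtype ∘ finBasis k W)) = W
  rw [Set.range_comp, span_image, (finBasis k W).span_eq, map_subtype_top]

-- The first block spans `Z ⊓ K`; the second, of the same size, spans a complement of `Z ⊔ K`.
theorem exists_basis_of_finrank_add_finrank_eq {Z K : Submodule k V}
    (h : finrank k Z + finrank k K = finrank k V) :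
    ∃ (c p q : ℕ) (b : Basis ((Fin c ⊕ Fin c) ⊕ (Fin p ⊕ Fin q)) k V),
      span k (Set.range (b ∘ Sum.map Sum.inl Sum.inl)) = Z ∧
      span k (Set.range (b ∘ Sum.map Sum.inl Sum.inr)) = K := by
  obtain ⟨P, hdP, hP⟩ :=
    IsModularLattice.exists_disjoint_and_sup_eq (inf_le_left : Z ⊓ K ≤ Z)
  obtain ⟨Q, hdQ, hQ⟩ :=
    IsModularLattice.exists_disjoint_and_sup_eq (inf_le_right : Z ⊓ K ≤ K)
  obtain ⟨D, hD⟩ := (Z ⊔ K).exists_isCompl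
  have hfP := finrank_add_finrank_of_disjoint_of_sup_eq hdP hP
  have hfQ := finrank_add_finrank_of_disjoint_of_sup_eq hdQ hQ
  have hfD := finrank_add_eq_of_isCompl hD
  have hfZK := finrank_sup_add_finrank_inf_eq Z K
  have hDC : finrank k ↥(Z ⊓ K) = finrank k D := by omega
  let basisVec (W : Submodule k V) (i : Fin (finrank k W)) : V := finBasis k W i
  have span_basisVec (W : Submodule k V) : span k (Set.range (basisVec W)) = W :=
    span_range_coe_finBasis W
  let v := Sum.elim (Sum.elim (basisVec (Z ⊓ K)) (basisVec D ∘ finCongr hDC))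
    (Sum.elim (basisVec P) (basisVec Q))
  have hspan : ⊤ ≤ span k (Set.range v) := by
    simp only [v, Set.Sum.elim_range, span_union, EquivLike.range_comp, span_basisVec]
    rw [sup_right_comm, sup_sup_distrib_left, hP, hQ, hD.sup_eq_top]
  have hcard : Fintype.card ((Fin (finrank k ↥(Z ⊓ K)) ⊕ Fin (finrank k ↥(Z ⊓ K))) ⊕
      (Fin (finrank k P) ⊕ Fin (finrank k Q))) = finrank k V := by
    simp only [Fintype.card_sum, Fintype.card_fin]
    omega
  refine ⟨_, _, _, basisOfTopLeSpanOfCardEqFinrank v hspan hcard, ?_, ?_⟩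
  · rw [coe_basisOfTopLeSpanOfCardEqFinrank, Sum.elim_comp_map, Sum.elim_comp_inl,
      Sum.elim_comp_inl, Set.Sum.elim_range, span_union, span_basisVec, span_basisVec, hP]
  · rw [coe_basisOfTopLeSpanOfCardEqFinrank, Sum.elim_comp_map, Sum.elim_comp_inl,
      Sum.elim_comp_inr, Set.Sum.elim_range, span_union, span_basisVec, span_basisVec, hQ]

end Submodule

section PermForm

variable {ι R M : Type*} [DecidableEq ι] [CommRing R] [AddCommGroup M] [Module R M]
  (b : Basis ι R M)

/-- The bilinear form whose Gram matrix in the basis `b` is the permutation matrix of `σ`. For an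
involution `σ` it is a nondegenerate symmetric form with prescribed orthogonality relations. -/
def permForm (σ : Equiv.Perm ι) : LinearMap.BilinForm R M :=
  b.toDual ∘ₗ (b.equiv b σ).toLinearMap

variable {σ : Equiv.Perm ι}

theorem permForm_apply_basis (i j : ι) :
    permForm b σ (b i) (b j) = if σ i = j then 1 else 0 := by
  simp [permForm, Basis.toDual_apply]

theorem permForm_isSymm (hσ : Function.Involutive σ) : (permForm b σ).IsSymm := by
  refine (LinearMap.BilinForm.isSymm_iff_basis b).2 fun i j => ?_
  simp only [permForm_apply_basis, hσ.eq_iff, eq_comm (a := i)]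

theorem permForm_nondegenerate (hσ : Function.Involutive σ) : (permForm b σ).Nondegenerate := by
  refine (permForm_isSymm b hσ).isRefl.nondegenerate_iff_separatingLeft.2 ?_
  rw [LinearMap.separatingLeft_iff_ker_eq_bot, LinearMap.ker_eq_bot]
  exact b.toDual_injective.comp (b.equiv b σ).injective

theorem span_le_orthogonal_permForm {κ κ' : Type*} {f : κ → ι} {f' : κ' → ι}
    (h : ∀ i j, σ (f i) ≠ f' j) :
    span R (Set.range (b ∘ f')) ≤ (permForm b σ).orthogonal (span R (Set.range (b ∘ f))) := by
  rw [span_le]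
  rintro _ ⟨j, rfl⟩ x hx
  suffices span R (Set.range (b ∘ f)) ≤ LinearMap.ker ((permForm b σ).flip (b (f' j))) from this hx
  rw [span_le]
  rintro _ ⟨i, rfl⟩
  simp [permForm_apply_basis, h]

end PermForm

section VectorSpace

variable {k V : Type*} [Field k] [AddCommGroup V] [Module k V] [FiniteDimensional k V]

theorem exists_isSymm_nondegenerate_orthogonal_eq {Z K : Submodule k V}
    (h : finrank k Z + finrank k K = finrank k V) :
    ∃ g : LinearMap.BilinForm k V, g.IsSymm ∧ g.Nondegenerate ∧ g.orthogonal Z = K := by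
  obtain ⟨c, p, q, b, hZ, hK⟩ := exists_basis_of_finrank_add_finrank_eq h
  let σ : Equiv.Perm ((Fin c ⊕ Fin c) ⊕ (Fin p ⊕ Fin q)) :=
    (Equiv.sumComm _ _).sumCongr (Equiv.refl _)
  have hσ : Function.Involutive σ := by rintro ((_ | _) | _) <;> rfl
  have hnd := permForm_nondegenerate b hσ
  refine ⟨permForm b σ, permForm_isSymm b hσ, hnd, ?_⟩
  have hle : K ≤ (permForm b σ).orthogonal Z := by
    rw [← hZ, ← hK]
    apply span_le_orthogonal_permForm
    rintro (_ | _) (_ | _) <;> simp [σ]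
  refine (eq_of_le_of_finrank_eq hle ?_).symm
  rw [LinearMap.BilinForm.finrank_orthogonal hnd]
  omega

section LeviCivita

variable (B : V →ₗ[k] V →ₗ[k] V) {g : LinearMap.BilinForm k V} (hg : g.Nondegenerate)

/-- The Levi-Civita product of a nondegenerate form `g` on an algebra with bracket `B`: the vector
`∇_x y` which the Koszul formula describes through its pairings with all of `V`. -/
def leviCivita (x y : V) : V :=
  (g.toDual hg).symm ((2 : k)⁻¹ • (g (B x y) - g.flip x ∘ₗ B y + g.flip y ∘ₗ B.flip x))

variable [NeZero (2 : k)]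

theorem two_mul_apply_leviCivita (x y z : V) :
    2 * g (leviCivita B hg x y) z = g (B x y) z - g (B y z) x + g (B z x) y := by
  rw [leviCivita, LinearMap.BilinForm.apply_toDual_symm_apply]
  exact mul_inv_cancel_left₀ two_ne_zero _

theorem leviCivita_mem_iff (hs : g.IsSymm) (hB : B.IsAlt) {H : Submodule k V}
    (hH : ∀ x ∈ H, ∀ y ∈ H, B x y ∈ H) :
    (∀ y ∈ H, ∀ z ∈ H, leviCivita B hg y z ∈ H) ↔
      ∀ x ∈ g.orthogonal H, ∀ y ∈ H, ∀ z ∈ H, g (B x y) z + g (B x z) y = 0 := by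
  have koszul : ∀ x ∈ g.orthogonal H, ∀ y ∈ H, ∀ z ∈ H,
      2 * g x (leviCivita B hg y z) = g (B x y) z + g (B x z) y := by
    intro x hx y hy z hz
    have hyz : g (B y z) x = 0 := hx _ (hH y hy z hz)
    rw [hs.eq, two_mul_apply_leviCivita, hyz, ← hB.neg x z]
    simp only [map_neg, LinearMap.neg_apply]
    ring
  constructor
  · intro hmem x hx y hy z hz
    rw [← koszul x hx y hy z hz, hs.eq, hx _ (hmem y hy z hz), mul_zero]
  · intro horth y hy z hz
    rw [← LinearMap.BilinForm.orthogonal_orthogonal hg hs.isRefl H]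
    intro x hx
    have hxyz := (koszul x hx y hy z hz).trans (horth x hx y hy z hz)
    exact (mul_eq_zero.1 hxyz).resolve_left two_ne_zero

end LeviCivita

theorem exists_isSymm_nondegenerate_forall_mem_orthogonal {B : V →ₗ[k] V →ₗ[k] V}
    (hB : ∀ x y, B (B x y) = 0) (W : Submodule k V) :
    ∃ g : LinearMap.BilinForm k V, g.IsSymm ∧ g.Nondegenerate ∧
      ∀ x ∈ g.orthogonal W, ∀ y ∈ W, ∀ z ∈ W, g (B x y) z + g (B x z) y = 0 := by
  set Z := LinearMap.ker B
  obtain ⟨K, hK, hKW⟩ := exists_finrank_eq_and_le_or_ge W (Nat.sub_le (finrank k V) (finrank k Z))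
  have hZK : finrank k Z + finrank k K = finrank k V := by
    rw [hK, Nat.add_sub_cancel' Z.finrank_le]
  obtain ⟨g, hs, hg, rfl⟩ := exists_isSymm_nondegenerate_orthogonal_eq hZK
  refine ⟨g, hs, hg, fun x hx y hy z hz => ?_⟩
  rcases hKW with hKW | hWK
  · have hxZ : x ∈ Z := by
      rw [← LinearMap.BilinForm.orthogonal_orthogonal hg hs.isRefl Z]
      exact LinearMap.BilinForm.orthogonal_le hKW hx
    simp [LinearMap.mem_ker.1 hxZ]
  · have bracket_perp (u v : V) : ∀ w ∈ W, g (B u v) w = 0 := fun w hw => hWK hw _ (hB u v)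
    rw [bracket_perp x y z hz, bracket_perp x z y hy, add_zero]

/-- A 2-step nilpotent Lie algebra is encoded by its bracket: an alternating bilinear map `B` with
`B (B x y) = 0`, which makes the Jacobi identity automatic. -/
theorem stmt_18_general [NeZero (2 : k)] {B : V →ₗ[k] V →ₗ[k] V} (hB : B.IsAlt)
    (hnil : ∀ x y, B (B x y) = 0) (H : Submodule k V) (hH : ∀ x ∈ H, ∀ y ∈ H, B x y ∈ H) :
    ∃ g : LinearMap.BilinForm k V, g.IsSymm ∧ ∃ hg : g.Nondegenerate,
      (∀ y ∈ H, ∀ z ∈ H, leviCivita B hg y z ∈ H) ∧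
      ∀ x ∈ g.orthogonal H, ∀ y ∈ H, ∀ z ∈ H, g (B x y) z + g (B x z) y = 0 := by
  obtain ⟨g, hs, hg, horth⟩ := exists_isSymm_nondegenerate_forall_mem_orthogonal hnil H
  exact ⟨g, hs, hg, (leviCivita_mem_iff B hg hs hB hH).2 horth, horth⟩

end VectorSpace

section CotangentHeisenberg

/-- The Lie bracket `bra` of `T*𝔥₃` as a bilinear map, the form in which `stmt_18_general` takes
brackets. -/
def braBilin : (Fin 6 → ℝ) →ₗ[ℝ] (Fin 6 → ℝ) →ₗ[ℝ] (Fin 6 → ℝ) :=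
  LinearMap.mk₂ ℝ bra
    (fun x y z => by ext i; fin_cases i <;> simp [bra] <;> ring)
    (fun c x y => by ext i; fin_cases i <;> simp [bra] <;> ring)
    (fun x y z => by ext i; fin_cases i <;> simp [bra] <;> ring)
    (fun c x y => by ext i; fin_cases i <;> simp [bra] <;> ring)

theorem braBilin_isAlt : braBilin.IsAlt := by
  intro x
  ext i
  fin_cases i <;> simp [braBilin, bra] <;> ring

theorem braBilin_braBilin (x y : Fin 6 → ℝ) : braBilin (braBilin x y) = 0 := by
  ext z i
  fin_cases i <;> simp [braBilin, bra]

end CotangentHeisenberg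

/-- For every Lie subalgebra `𝔥` of `T*𝔥₃` there is a nondegenerate symmetric bilinear
form making `𝔥` totally geodesic for the Levi-Civita connection. -/
theorem stmt_18 (H : Submodule ℝ (Fin 6 → ℝ))
    (hH : ∀ x ∈ H, ∀ y ∈ H, bra x y ∈ H) :
    ∃ g : (Fin 6 → ℝ) →ₗ[ℝ] (Fin 6 → ℝ) →ₗ[ℝ] ℝ,
      (∀ x y, g x y = g y x) ∧ (∀ x, (∀ y, g x y = 0) → x = 0) ∧
      (∃ D : (Fin 6 → ℝ) → (Fin 6 → ℝ) → (Fin 6 → ℝ),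
        (∀ x y z, 2 * g (D x y) z =
          g (bra x y) z - g (bra y z) x + g (bra z x) y) ∧
        ∀ y ∈ H, ∀ z ∈ H, D y z ∈ H) ∧
      (∀ x : Fin 6 → ℝ, (∀ h ∈ H, g x h = 0) →
        ∀ y ∈ H, ∀ z ∈ H, g (bra x y) z + g (bra x z) y = 0) := by
  obtain ⟨g, hs, hg, hmem, horth⟩ := stmt_18_general braBilin_isAlt braBilin_braBilin H hH
  exact ⟨g, hs.eq, hg.1, ⟨leviCivita braBilin hg, two_mul_apply_leviCivita braBilin hg, hmem⟩,
    fun x hx => horth x fun h hh => (hs.eq h x).trans (hx h hh)⟩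
end
end
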